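/- Let R be a unital ℂ-algebra and let a, a', b, b' ∈ R satisfy: a'a − q·aa' = (1−q)·1, b'b − p·bb' = (1−p)·1, each of a, a' commutes with each of b, b', and (1−aa')(1−bb') = 0, where 0 < p,q < 1. For an integer n ≥ 1 define R_j := a^{j}(b')^{n−j} for j = 0,…,n and L_k := [n choose k]_q · q^{n−k} · (1−aa')^{n−k} (a')^{k} b^{n−k} for k = 0,…,n. Then the (n+1)×(n+1) matrix E over R with entries E_{jk} = R_j · L_k is idempotent: E² = E. In particular, the 2×2 matrix [[aa', q·a(1−aa')b], [a'b', q·(1−aa')b'b]] is idempotent. -/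

import Mathlib

/-- The Gaussian (q-)binomial coefficient
`[n choose k]_q = ((q−1)⋯(qⁿ−1)) / (((q−1)⋯(q^k−1))·((q−1)⋯(q^{n−k}−1)))`. -/
noncomputable def gbinom (q : ℝ) (n k : ℕ) : ℝ :=
  (∏ i ∈ Finset.range n, (q ^ (i + 1) - 1)) /
    ((∏ i ∈ Finset.range k, (q ^ (i + 1) - 1)) * (∏ i ∈ Finset.range (n - k), (q ^ (i + 1) - 1)))

/-! The matrix `E` is the product of a column `R` and a row `L` with `∑ L_k R_k = 1`, hence
idempotent. Put `x = 1 - aa'` and `P_k = a'^k a^k`. The relation between `a` and `a'` says that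
`a'a = 1 - qx` and gives `a'x = qxa'`, so that `P_{k+1} = P_k - q^k (qx) P_k`. Since `x` absorbs
`bb'`, the sum `∑ L_k R_k` reduces to `∑ [n choose k]_q (qx)^(n-k) P_k`, and the Pascal recursion
for the Gaussian binomials shows that this sum does not depend on `n`; for `n = 0` it is `1`. -/

/-- The Gaussian binomial coefficient `[n choose k]_q` over an arbitrary semiring. It is defined by
the Pascal recursion instead of a quotient of products, so that `q` may be a root of unity. -/
def gaussBinom {K : Type*} [Semiring K] (q : K) : ℕ → ℕ → K
  | _, 0 => 1
  | 0, _ + 1 => 0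
  | n + 1, k + 1 => gaussBinom q n k + q ^ (k + 1) * gaussBinom q n (k + 1)

section Semiring

variable {K : Type*} [Semiring K] (q : K)

lemma gaussBinom_zero_right (n : ℕ) : gaussBinom q n 0 = 1 := by
  cases n <;> rfl

lemma gaussBinom_succ_succ (n k : ℕ) :
    gaussBinom q (n + 1) (k + 1) = gaussBinom q n k + q ^ (k + 1) * gaussBinom q n (k + 1) :=
  rfl

lemma gaussBinom_eq_zero_of_lt {n k : ℕ} (h : n < k) : gaussBinom q n k = 0 := by
  induction n generalizing k with
  | zero => obtain ⟨k, rfl⟩ := Nat.exists_eq_succ_of_ne_zero h.ne'; rfl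
  | succ n ih =>
    obtain ⟨k, rfl⟩ := Nat.exists_eq_succ_of_ne_zero (Nat.ne_zero_of_lt h)
    rw [Nat.succ_eq_add_one, gaussBinom_succ_succ, ih (by lia), ih (by lia), mul_zero, add_zero]

lemma gaussBinom_self (n : ℕ) : gaussBinom q n n = 1 := by
  induction n with
  | zero => rfl
  | succ n ih =>
    rw [gaussBinom_succ_succ, ih, gaussBinom_eq_zero_of_lt q n.lt_succ_self, mul_zero, add_zero]

lemma map_gaussBinom {A : Type*} [Semiring A] (f : K →+* A) (n k : ℕ) :
    f (gaussBinom q n k) = gaussBinom (f q) n k := by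
  induction n generalizing k with
  | zero => cases k <;> simp [gaussBinom]
  | succ n ih => cases k <;> simp [gaussBinom, ih]

end Semiring

lemma gaussBinom_add_mul_prod {K : Type*} [CommRing K] (q : K) (m k : ℕ) :
    gaussBinom q (m + k) k *
      ((∏ i ∈ Finset.range k, (q ^ (i + 1) - 1)) * ∏ i ∈ Finset.range m, (q ^ (i + 1) - 1)) =
    ∏ i ∈ Finset.range (m + k), (q ^ (i + 1) - 1) := by
  induction k generalizing m with
  | zero => simp [gaussBinom_zero_right]
  | succ k ihk =>
    induction m with
    | zero => simp [gaussBinom_self]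
    | succ m ihm =>
      have left := ihk (m + 1)
      have right := ihm
      rw [show m + 1 + k = m + (k + 1) by lia] at left
      rw [show m + 1 + (k + 1) = m + (k + 1) + 1 by lia, gaussBinom_succ_succ,
        Finset.prod_range_succ _ (m + (k + 1))]
      rw [Finset.prod_range_succ _ k] at right ⊢
      rw [Finset.prod_range_succ _ m] at left ⊢
      linear_combination (q ^ (k + 1) - 1) * left + q ^ (k + 1) * (q ^ (m + 1) - 1) * right

lemma gbinom_eq_gaussBinom {q : ℝ} {n k : ℕ} (hq : ∀ i < n, q ^ (i + 1) ≠ 1) (hk : k ≤ n) :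
    gbinom q n k = gaussBinom q n k := by
  have prod_ne_zero {m : ℕ} (hm : m ≤ n) : ∏ i ∈ Finset.range m, (q ^ (i + 1) - 1) ≠ 0 :=
    Finset.prod_ne_zero_iff.2 fun i hi =>
      sub_ne_zero.2 (hq i ((Finset.mem_range.1 hi).trans_le hm))
  have prod_eq := gaussBinom_add_mul_prod q (n - k) k
  rw [Nat.sub_add_cancel hk] at prod_eq
  rw [gbinom, div_eq_iff (mul_ne_zero (prod_ne_zero hk) (prod_ne_zero (n.sub_le k))), prod_eq]

lemma ofReal_gbinom {q : ℝ} (hq0 : 0 < q) (hq1 : q < 1) {n : ℕ} (k : Fin (n + 1)) :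
    (gbinom q n k : ℂ) = gaussBinom (q : ℂ) n k := by
  rw [gbinom_eq_gaussBinom (fun i _ => (pow_lt_one₀ hq0.le hq1 i.succ_ne_zero).ne) k.is_le]
  exact map_gaussBinom q Complex.ofRealHom n k

-- For `P k = ∏ i < k, (1 - q ^ i * y)` this is a form of the `q`-binomial theorem.
lemma sum_gaussBinom_smul_pow_mul {K A : Type*} [CommSemiring K] [Semiring A] [Algebra K A]
    {q : K} {y : A} {P : ℕ → A} (hP : ∀ k, P (k + 1) + q ^ k • (y * P k) = P k) (n : ℕ) :
    ∑ k ∈ Finset.range (n + 1), gaussBinom q n k • (y ^ (n - k) * P k) = P 0 := by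
  induction n with
  | zero => simp [gaussBinom]
  | succ n ih =>
    have shift : ∑ k ∈ Finset.range (n + 1),
          (q ^ (k + 1) * gaussBinom q n (k + 1)) • (y ^ (n - k) * P (k + 1)) + y ^ (n + 1) * P 0 =
        ∑ k ∈ Finset.range (n + 1), (q ^ k * gaussBinom q n k) • (y ^ (n + 1 - k) * P k) := by
      have h := Finset.sum_range_succ'
        (fun k => (q ^ k * gaussBinom q n k) • (y ^ (n + 1 - k) * P k)) (n + 1)
      rw [Finset.sum_range_succ, gaussBinom_eq_zero_of_lt q n.lt_succ_self] at h
      simpa [gaussBinom_zero_right] using h.symm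
    have term {k : ℕ} (hk : k ∈ Finset.range (n + 1)) :
        gaussBinom q n k • (y ^ (n - k) * P (k + 1)) +
          (q ^ k * gaussBinom q n k) • (y ^ (n + 1 - k) * P k) =
        gaussBinom q n k • (y ^ (n - k) * P k) := by
      rw [Nat.succ_sub (Finset.mem_range_succ_iff.1 hk), pow_succ, mul_assoc, mul_comm (q ^ k),
        mul_smul, ← smul_add, ← mul_smul_comm, ← mul_add, hP]
    rw [Finset.sum_range_succ']
    simp only [gaussBinom_succ_succ, gaussBinom_zero_right, Nat.add_sub_add_right, add_smul,
      Finset.sum_add_distrib, one_smul, Nat.sub_zero]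
    rw [add_assoc, shift, ← Finset.sum_add_distrib, Finset.sum_congr rfl fun _ => term, ih]

lemma semiconjBy_pow_left_smul {K A : Type*} [CommSemiring K] [Semiring A] [Algebra K A] {q : K}
    {u x : A} (h : SemiconjBy u x (q • x)) (k : ℕ) : SemiconjBy (u ^ k) x (q ^ k • x) := by
  induction k with
  | zero => simp
  | succ k ih =>
    have scaled : SemiconjBy u (q ^ k • x) (q ^ (k + 1) • x) := by
      rw [SemiconjBy, mul_smul_comm, h.eq, pow_succ, mul_smul, smul_mul_assoc _ (q • x)]
    rw [pow_succ']
    exact scaled.mul_left ih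

lemma pow_mul_pow_mul_pow_eq_pow {M : Type*} [Monoid M] {x b b' : M} (hxb : Commute x b)
    (hx : x * (b * b') = x) (m : ℕ) : x ^ m * (b ^ m * b' ^ m) = x ^ m := by
  induction m with
  | zero => simp
  | succ m ih =>
    calc x ^ (m + 1) * (b ^ (m + 1) * b' ^ (m + 1))
        = x ^ m * (x * b ^ m) * (b * b') * b' ^ m := by
          simp only [pow_succ x, pow_succ b, pow_succ' b', mul_assoc]
      _ = x ^ m * b ^ m * (x * (b * b')) * b' ^ m := by
          simp only [(hxb.pow_right m).eq, mul_assoc]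
      _ = x ^ m * (x * b ^ m) * b' ^ m := by
          simp only [hx, (hxb.pow_right m).eq, mul_assoc]
      _ = x * (x ^ m * (b ^ m * b' ^ m)) := by
          simp only [← mul_assoc, ← pow_succ, ← pow_succ']
      _ = x ^ (m + 1) := by rw [ih, pow_succ']

lemma isIdempotentElem_vecMulVec {ι A : Type*} [Fintype ι] [Semiring A] {u v : ι → A}
    (h : v ⬝ᵥ u = 1) : IsIdempotentElem (Matrix.vecMulVec u v) := by
  rw [IsIdempotentElem, Matrix.vecMulVec_mul_vecMulVec, h, one_smul]

section StrongConnection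

variable {K R : Type*} [CommRing K] [Ring R] [Algebra K R] {q : K} {a a' b b' : R}

/-- The left legs `L_k = [n choose k]_q q^(n-k) (1 - aa')^(n-k) a'^k b^(n-k)` of the strong
connection that defines the line bundle of winding number `n`. -/
def connectionLeft (q : K) (a a' b : R) (n : ℕ) (k : Fin (n + 1)) : R :=
  (gaussBinom q n k * q ^ (n - (k : ℕ))) •
    ((1 - a * a') ^ (n - (k : ℕ)) * a' ^ (k : ℕ) * b ^ (n - (k : ℕ)))

/-- The right legs `R_j = a^j b'^(n-j)` of the strong connection that defines the line bundle of
winding number `n`. -/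
def connectionRight (a b' : R) (n : ℕ) (j : Fin (n + 1)) : R :=
  a ^ (j : ℕ) * b' ^ (n - (j : ℕ))

lemma mul_eq_one_sub_smul (ha : a' * a - q • (a * a') = (1 - q) • (1 : R)) :
    a' * a = 1 - q • (1 - a * a') := by
  rw [sub_eq_iff_eq_add.1 ha]
  module

lemma semiconjBy_one_sub_mul (ha : a' * a - q • (a * a') = (1 - q) • (1 : R)) :
    SemiconjBy a' (1 - a * a') (q • (1 - a * a')) := by
  calc a' * (1 - a * a') = (1 - a' * a) * a' := by noncomm_ring
    _ = q • (1 - a * a') * a' := by rw [mul_eq_one_sub_smul ha, sub_sub_cancel]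

lemma pow_succ_mul_pow_succ_add (ha : a' * a - q • (a * a') = (1 - q) • (1 : R)) (k : ℕ) :
    a' ^ (k + 1) * a ^ (k + 1) + q ^ k • (q • (1 - a * a') * (a' ^ k * a ^ k)) =
      a' ^ k * a ^ k := by
  have semiconj := (semiconjBy_pow_left_smul (semiconjBy_one_sub_mul ha) k).eq
  have expand : a' ^ (k + 1) * a ^ (k + 1) =
      a' ^ k * a ^ k - q • (a' ^ k * (1 - a * a') * a ^ k) := by
    calc a' ^ (k + 1) * a ^ (k + 1) = a' ^ k * (a' * a) * a ^ k := by
          simp only [pow_succ a', pow_succ' a, mul_assoc]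
      _ = a' ^ k * a ^ k - q • (a' ^ k * (1 - a * a') * a ^ k) := by
          rw [mul_eq_one_sub_smul ha, mul_sub, mul_one, sub_mul, mul_smul_comm, smul_mul_assoc]
  rw [expand, semiconj, smul_mul_assoc, smul_mul_assoc, smul_mul_assoc, smul_comm q, mul_assoc,
    sub_add_cancel]

lemma commute_one_sub_mul_pow_mul_pow (ha : a' * a - q • (a * a') = (1 - q) • (1 : R)) (k : ℕ) :
    Commute (1 - a * a') (a' ^ k * a ^ k) := by
  induction k with
  | zero => simp
  | succ k ih =>
    rw [eq_sub_of_add_eq (pow_succ_mul_pow_succ_add ha k)]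
    exact ih.sub_right
      ((((Commute.refl _).smul_right q).mul_right ih).smul_right (q ^ k))

lemma one_sub_mul_pow_absorbs (ha : a' * a - q • (a * a') = (1 - q) • (1 : R))
    (hab : Commute a b) (ha'b : Commute a' b) (hkey : (1 - a * a') * (1 - b * b') = 0) (m k : ℕ) :
    (1 - a * a') ^ m * a' ^ k * b ^ m * (a ^ k * b' ^ m) =
      (1 - a * a') ^ m * (a' ^ k * a ^ k) := by
  have x_comm_b : Commute (1 - a * a') b := (Commute.one_left b).sub_left (hab.mul_left ha'b)
  have x_comm_P : Commute ((1 - a * a') ^ m) (a' ^ k * a ^ k) :=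
    (commute_one_sub_mul_pow_mul_pow ha k).pow_left m
  have x_absorbs : (1 - a * a') * (b * b') = 1 - a * a' := by
    rw [mul_sub, mul_one] at hkey
    exact (sub_eq_zero.1 hkey).symm
  calc (1 - a * a') ^ m * a' ^ k * b ^ m * (a ^ k * b' ^ m)
      = (1 - a * a') ^ m * a' ^ k * (b ^ m * a ^ k) * b' ^ m := by simp only [mul_assoc]
    _ = (1 - a * a') ^ m * (a' ^ k * a ^ k) * (b ^ m * b' ^ m) := by
        rw [← (hab.pow_pow k m).eq]; simp only [mul_assoc]
    _ = (a' ^ k * a ^ k) * ((1 - a * a') ^ m * (b ^ m * b' ^ m)) := by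
        rw [x_comm_P.eq, mul_assoc]
    _ = (1 - a * a') ^ m * (a' ^ k * a ^ k) := by
        rw [pow_mul_pow_mul_pow_eq_pow x_comm_b x_absorbs, x_comm_P.eq]

lemma connectionLeft_mul_connectionRight (ha : a' * a - q • (a * a') = (1 - q) • (1 : R))
    (hab : Commute a b) (ha'b : Commute a' b) (hkey : (1 - a * a') * (1 - b * b') = 0)
    (n : ℕ) (k : Fin (n + 1)) :
    connectionLeft q a a' b n k * connectionRight a b' n k =
      gaussBinom q n k • ((q • (1 - a * a')) ^ (n - (k : ℕ)) * (a' ^ (k : ℕ) * a ^ (k : ℕ))) := by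
  rw [connectionLeft, connectionRight, smul_mul_assoc, mul_smul, smul_pow, smul_mul_assoc,
    one_sub_mul_pow_absorbs ha hab ha'b hkey]

lemma connectionLeft_dotProduct_connectionRight
    (ha : a' * a - q • (a * a') = (1 - q) • (1 : R)) (hab : Commute a b) (ha'b : Commute a' b)
    (hkey : (1 - a * a') * (1 - b * b') = 0) (n : ℕ) :
    connectionLeft q a a' b n ⬝ᵥ connectionRight a b' n = 1 := by
  simp only [dotProduct, connectionLeft_mul_connectionRight ha hab ha'b hkey]
  rw [Fin.sum_univ_eq_sum_range fun k =>
    gaussBinom q n k • ((q • (1 - a * a')) ^ (n - k) * (a' ^ k * a ^ k))]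
  simpa using sum_gaussBinom_smul_pow_mul (P := fun k => a' ^ k * a ^ k)
    (pow_succ_mul_pow_succ_add ha) n

lemma reindex_vecMulVec_connection_one (hab' : Commute a b') (ha'b' : Commute a' b') :
    Matrix.reindexRingEquiv R Fin.revPerm
        (Matrix.vecMulVec (connectionRight a b' 1) (connectionLeft q a a' b 1)) =
      !![a * a', q • (a * (1 - a * a') * b); a' * b', q • ((1 - a * a') * b' * b)] := by
  have x_comm_b' : Commute (1 - a * a') b' :=
    (Commute.one_left b').sub_left (hab'.mul_left ha'b')
  ext i j
  fin_cases i <;> fin_cases j <;>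
    simp [Matrix.vecMulVec_apply, connectionLeft, connectionRight, gaussBinom, mul_assoc,
      ha'b'.eq, x_comm_b'.left_comm]

theorem stmt12_general (ha : a' * a - q • (a * a') = (1 - q) • (1 : R))
    (hab : Commute a b) (hab' : Commute a b') (ha'b : Commute a' b) (ha'b' : Commute a' b')
    (hkey : (1 - a * a') * (1 - b * b') = 0) :
    (∀ n : ℕ, IsIdempotentElem
      (Matrix.vecMulVec (connectionRight a b' n) (connectionLeft q a a' b n))) ∧
    IsIdempotentElem
      !![a * a', q • (a * (1 - a * a') * b); a' * b', q • ((1 - a * a') * b' * b)] := by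
  have idem (n : ℕ) := isIdempotentElem_vecMulVec
    (connectionLeft_dotProduct_connectionRight ha hab ha'b hkey n)
  refine ⟨idem, ?_⟩
  rw [← reindex_vecMulVec_connection_one hab' ha'b']
  exact (idem 1).map (Matrix.reindexRingEquiv R Fin.revPerm)

end StrongConnection

/-- the matrices `E_{jk} = R_j·L_k` built from the strong connection are
idempotent; in particular the displayed `2×2` matrix is idempotent. -/
theorem stmt12 {R : Type*} [Ring R] [Algebra ℂ R] (p q : ℝ)
    (hp0 : 0 < p) (hp1 : p < 1) (hq0 : 0 < q) (hq1 : q < 1)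
    (a a' b b' : R)
    (ha : a' * a - (q : ℂ) • (a * a') = ((1 - q : ℝ) : ℂ) • (1 : R))
    (hb : b' * b - (p : ℂ) • (b * b') = ((1 - p : ℝ) : ℂ) • (1 : R))
    (hab : a * b = b * a) (hab' : a * b' = b' * a)
    (ha'b : a' * b = b * a') (ha'b' : a' * b' = b' * a')
    (hkey : (1 - a * a') * (1 - b * b') = 0) :
    (∀ n : ℕ, 1 ≤ n →
      (Matrix.of (fun j k : Fin (n + 1) =>
          (a ^ (j : ℕ) * b' ^ (n - (j : ℕ))) *
            (((gbinom q n k * q ^ (n - (k : ℕ)) : ℝ) : ℂ) •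
              ((1 - a * a') ^ (n - (k : ℕ)) * a' ^ (k : ℕ) * b ^ (n - (k : ℕ)))))) *
        (Matrix.of (fun j k : Fin (n + 1) =>
          (a ^ (j : ℕ) * b' ^ (n - (j : ℕ))) *
            (((gbinom q n k * q ^ (n - (k : ℕ)) : ℝ) : ℂ) •
              ((1 - a * a') ^ (n - (k : ℕ)) * a' ^ (k : ℕ) * b ^ (n - (k : ℕ)))))) =
      (Matrix.of (fun j k : Fin (n + 1) =>
          (a ^ (j : ℕ) * b' ^ (n - (j : ℕ))) *
            (((gbinom q n k * q ^ (n - (k : ℕ)) : ℝ) : ℂ) •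
              ((1 - a * a') ^ (n - (k : ℕ)) * a' ^ (k : ℕ) * b ^ (n - (k : ℕ))))))) ∧
    (!![a * a', (q : ℂ) • (a * (1 - a * a') * b); a' * b', (q : ℂ) • ((1 - a * a') * b' * b)] *
      !![a * a', (q : ℂ) • (a * (1 - a * a') * b); a' * b', (q : ℂ) • ((1 - a * a') * b' * b)] =
      !![a * a', (q : ℂ) • (a * (1 - a * a') * b); a' * b', (q : ℂ) • ((1 - a * a') * b' * b)]) := by
  simp only [Complex.ofReal_mul, Complex.ofReal_pow, ofReal_gbinom hq0 hq1]
  exact (stmt12_general (q := (q : ℂ)) (by simpa using ha) hab hab' ha'b ha'b' hkey).imp_left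
    fun idem n _ => idem n
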